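/- arXiv:1607.01497 — 2 statements merged into one kernel-verified Lean document; each statement's English description precedes it below -/
import Mathlib

section
/- Let v be complex with v+1, v+2 not nonpositive integers. Then for all complex x with x ≠ 0: e^{−x} · ∑_{n≥0} (xⁿ/(1+v)_n) · L_n^{(v+1)}(x) = Γ(v+1) · x^{−v−1} · { (x+v+1)·J_{v+1}(2x) − x·J_{v+2}(2x) }, where the branch x^{−v−1} is chosen consistently with the branch used inside J_{v+1}(2x) and J_{v+2}(2x); equivalently, after cancelling the powers of x, the identity reads e^{−x} · ∑_{n≥0} (xⁿ/(1+v)_n) · L_n^{(v+1)}(x) = (x+v+1)·₀F₁[—; v+2; −x²]/(v+1) − (x²/((v+1)(v+2)))·₀F₁[—; v+3; −x²]. -/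
open scoped BigOperators Nat

/-- Pochhammer (rising factorial) symbol `(a)_n`. -/
noncomputable def poch (a : ℂ) (n : ℕ) : ℂ := (ascPochhammer ℂ n).eval a

/-- General term of the generalized hypergeometric series `pFq`. -/
noncomputable def hypTerm (a b : List ℂ) (x : ℂ) (n : ℕ) : ℂ :=
  (a.map (fun c => poch c n)).prod / (b.map (fun c => poch c n)).prod * x ^ n / (n ! : ℂ)

/-- Generalized hypergeometric series `pFq[a; b; x]` (as a `tsum`). -/
noncomputable def hyp (a b : List ℂ) (x : ℂ) : ℂ := ∑' n : ℕ, hypTerm a b x n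

/-- Generalized Laguerre polynomial `L_n^{(v)}(x) = ((v+1)_n/n!)·₁F₁[−n; v+1; x]`. -/
noncomputable def Lag (n : ℕ) (v x : ℂ) : ℂ :=
  poch (v + 1) n / (n ! : ℂ) * hyp [-(n : ℂ)] [v + 1] x


lemma aux_succ (a : ℂ) (n : ℕ) : poch a (n+1) = poch a n * (a + n) := by
  simp [poch, ascPochhammer_succ_eval]

lemma aux_succ_left (a : ℂ) (n : ℕ) : poch a (n+1) = a * poch (a+1) n := by
  induction n with
  | zero => simp [poch]
  | succ n ih => rw [aux_succ, ih, aux_succ]; push_cast; ring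

lemma aux_ne (a : ℂ) (ha : ∀ k : ℕ, a ≠ -(k : ℂ)) (n : ℕ) : poch a n ≠ 0 := by
  induction n with
  | zero => simp [poch]
  | succ n ih =>
    rw [aux_succ]
    refine mul_ne_zero ih fun h => ha n (eq_neg_of_add_eq_zero_left h)

lemma aux_neg (n k : ℕ) : poch (-(n:ℂ)) k = (-1)^k * (n.descFactorial k : ℂ) := by
  rw [poch, ascPochhammer_eval_neg_eq_descPochhammer, descPochhammer_eval_eq_descFactorial]

lemma aux_term (b z : ℂ) (k : ℕ) : hypTerm [] [b] z k = z ^ k / (poch b k * (k ! : ℂ)) := by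
  simp [hypTerm]; field_simp

lemma aux_shift (b z : ℂ) (k : ℕ) :
    ((k+1 : ℕ) : ℂ) * hypTerm [] [b] z (k+1) = z / b * hypTerm [] [b+1] z k := by
  rw [aux_term, aux_term, aux_succ_left, Nat.factorial_succ]
  have : ((k+1 : ℕ) : ℂ) ≠ 0 := by exact_mod_cast Nat.succ_ne_zero k
  push_cast at this ⊢
  have h2 : (k ! : ℂ) ≠ 0 := by exact_mod_cast Nat.factorial_ne_zero k
  rw [pow_succ]
  field_simp

open Filter Topology in
lemma aux_summ (b z : ℂ) (hz : z ≠ 0) (hb : ∀ k : ℕ, b ≠ -(k : ℂ)) :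
    Summable (fun k => hypTerm [] [b] z k) := by
  have hne : ∀ k, hypTerm [] [b] z k ≠ 0 := fun k => by
    rw [aux_term]
    exact div_ne_zero (pow_ne_zero _ hz) (mul_ne_zero (aux_ne b hb k)
      (by exact_mod_cast Nat.factorial_ne_zero k))
  refine summable_of_ratio_test_tendsto_lt_one (l := 0) one_pos (.of_forall hne) ?_
  have h1 : ∀ k : ℕ, hypTerm [] [b] z (k+1) = hypTerm [] [b] z k * (z * ((b + k)⁻¹ * ((k:ℂ)+1)⁻¹)) := by
    intro k
    rw [aux_term, aux_term, aux_succ, Nat.factorial_succ, pow_succ]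
    push_cast
    simp only [div_eq_mul_inv, mul_inv]
    ring
  have h2 : Tendsto (fun k : ℕ => z * ((b + k)⁻¹ * ((k:ℂ)+1)⁻¹)) atTop (𝓝 (z * (0 * 0))) := by
    have hc : Tendsto (fun k : ℕ => (k : ℂ)) atTop (Bornology.cobounded ℂ) :=
      tendsto_norm_atTop_iff_cobounded.1 (by
        simpa using tendsto_natCast_atTop_atTop (R := ℝ))
    refine tendsto_const_nhds.mul (.mul ?_ ?_)
    · exact tendsto_inv₀_cobounded.comp (by
        simpa [Function.comp_def, add_comm] using (tendsto_add_const_cobounded b).comp hc)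
    · simpa [one_div] using tendsto_one_div_add_atTop_nhds_zero_nat (𝕜 := ℂ)
  simp only [mul_zero] at h2
  have h3 := h2.norm
  rw [norm_zero] at h3
  refine h3.congr fun k => ?_
  rw [h1, norm_mul (hypTerm _ _ _ _), mul_div_cancel_left₀ _ (norm_ne_zero_iff.2 (hne k))]

lemma aux_lag (n : ℕ) (c x : ℂ) (hc0 : ∀ k : ℕ, c ≠ -(k : ℂ)) (hc : ∀ k : ℕ, c + 1 ≠ -(k : ℂ)) :
    x ^ n / poch c n * Lag n c x =
     ∑ p ∈ Finset.HasAntidiagonal.antidiagonal n,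
       ((c + p.1) / c * hypTerm [] [c+1] (-x^2) p.1) * (x ^ p.2 / (p.2 ! : ℂ)) +
     ∑ p ∈ Finset.HasAntidiagonal.antidiagonal n,
       (hypTerm [] [c+1] (-x^2) p.1) * (1 / c * (p.2 * (x ^ p.2 / (p.2 ! : ℂ)))) := by
  have hc' : c ≠ 0 := by simpa using hc0 0
  have hcn : poch c n ≠ 0 := aux_ne c hc0 n
  have hq : poch (c+1) n = poch c n * ((c + n) / c) := by
    have := aux_succ c n
    rw [aux_succ_left] at this
    field_simp
    linear_combination this
  rw [← Finset.sum_add_distrib, Finset.Nat.sum_antidiagonal_eq_sum_range_succ_mk, Lag, hyp,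
    tsum_eq_sum (s := Finset.range (n+1)), Finset.mul_sum, Finset.mul_sum]
  · refine Finset.sum_congr rfl fun k hk => ?_
    have hk : k ≤ n := by simpa [Nat.lt_succ_iff] using hk
    obtain ⟨m, rfl⟩ := Nat.exists_eq_add_of_le hk
    rw [aux_term, hq]
    have hd : ((k+m).descFactorial k : ℂ) = ((k+m)! : ℂ) / (m ! : ℂ) := by
      have h2 : (m ! : ℂ) ≠ 0 := by exact_mod_cast Nat.factorial_ne_zero m
      rw [eq_div_iff h2, mul_comm]
      have := Nat.factorial_mul_descFactorial hk
      rw [Nat.add_sub_cancel_left] at this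
      exact_mod_cast this
    simp only [hypTerm, List.map_cons, List.map_nil, List.prod_cons, List.prod_nil, mul_one,
      aux_neg, hd, Nat.add_sub_cancel_left]
    have h2 : (m ! : ℂ) ≠ 0 := by exact_mod_cast Nat.factorial_ne_zero m
    have h3 : (k ! : ℂ) ≠ 0 := by exact_mod_cast Nat.factorial_ne_zero k
    have h4 : ((k+m)! : ℂ) ≠ 0 := by exact_mod_cast Nat.factorial_ne_zero _
    have h5 := aux_ne _ hc k
    rw [neg_pow (x^2) k, ← pow_mul]
    push_cast
    field_simp
    ring
  · intro k hk
    have hk : n < k := by simpa [Nat.lt_succ_iff] using hk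
    simp [hypTerm, aux_neg, Nat.descFactorial_eq_zero_iff_lt.2 hk]

/-- Special case `e = v+1` of Theorem 1 (equation (5.1)), in the equivalent form
obtained after cancelling the powers of `x`. -/
theorem stmt_12 (v : ℂ)
    (hv1 : ∀ k : ℕ, v + 1 ≠ -(k : ℂ)) (hv2 : ∀ k : ℕ, v + 2 ≠ -(k : ℂ))
    (x : ℂ) (hx : x ≠ 0) :
    (Complex.exp (-x) * ∑' n : ℕ, x ^ n / poch (1 + v) n * Lag n (v + 1) x) =
      (x + v + 1) * hyp [] [v + 2] (-x ^ 2) / (v + 1) -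
        x ^ 2 / ((v + 1) * (v + 2)) * hyp [] [v + 3] (-x ^ 2) := by
  have e1 : (1 + v) = v + 1 := by ring
  have e2 : v + 2 = v + 1 + 1 := by ring
  have e3 : v + 3 = v + 1 + 1 + 1 := by ring
  have e4 : x + v + 1 = x + (v + 1) := by ring
  have hv3 : ∀ k : ℕ, v + 3 ≠ -(k : ℂ) := fun k h => hv2 (k+1) (by
    push_cast; linear_combination h)
  rw [e1, e4]
  rw [e3] at hv3 ⊢
  rw [e2] at hv2 ⊢
  clear e1 e2 e3 e4
  generalize v + 1 = c at *
  have hc0 : c ≠ 0 := by simpa using hv1 0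
  have hz : -x^2 ≠ 0 := by simpa using hx
  have sA := aux_summ (c+1) (-x^2) hz hv2
  have sA1 := aux_summ (c+1+1) (-x^2) hz hv3
  have skA : HasSum (fun k : ℕ => (k:ℂ) * hypTerm [] [c+1] (-x^2) k)
      (-x^2 / (c+1) * hyp [] [c+1+1] (-x^2)) := by
    rw [← hasSum_nat_add_iff' 1]
    simp only [aux_shift]
    simpa [hyp] using sA1.hasSum.mul_left (-x^2 / (c+1))
  have hA : HasSum (fun k : ℕ => (c + k) / c * hypTerm [] [c+1] (-x^2) k)
      (hyp [] [c+1] (-x^2) + 1 / c * (-x^2 / (c+1) * hyp [] [c+1+1] (-x^2))) := by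
    refine (sA.hasSum.add (skA.mul_left (1/c))).congr_fun ?_
    intro k
    field_simp
  have hB : HasSum (fun m : ℕ => x ^ m / (m ! : ℂ)) (Complex.exp x) := by
    rw [Complex.exp_eq_exp_ℂ]
    exact NormedSpace.expSeries_div_hasSum_exp x
  have hmB : HasSum (fun m : ℕ => 1 / c * ((m:ℂ) * (x ^ m / (m ! : ℂ)))) (1 / c * (x * Complex.exp x)) := by
    refine HasSum.mul_left _ ?_
    rw [← hasSum_nat_add_iff' 1]
    simp only [Finset.range_one, Finset.sum_singleton, Nat.cast_zero, zero_mul, sub_zero]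
    refine (hB.mul_left x).congr_fun ?_
    intro m
    have h2 : (m ! : ℂ) ≠ 0 := by exact_mod_cast Nat.factorial_ne_zero m
    have h3 : ((m:ℂ)+1) ≠ 0 := by exact_mod_cast Nat.succ_ne_zero m
    rw [Nat.factorial_succ, pow_succ]
    push_cast
    field_simp
  simp only [aux_lag _ c x hv1 hv2]
  rw [Summable.tsum_add
    (summable_norm_sum_mul_antidiagonal_of_summable_norm hA.summable.norm hB.summable.norm).of_norm
    (summable_norm_sum_mul_antidiagonal_of_summable_norm sA.norm hmB.summable.norm).of_norm,
    ← tsum_mul_tsum_eq_tsum_sum_antidiagonal_of_summable_norm hA.summable.norm hB.summable.norm,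
    ← tsum_mul_tsum_eq_tsum_sum_antidiagonal_of_summable_norm sA.norm hmB.summable.norm,
    hA.tsum_eq, hB.tsum_eq, hmB.tsum_eq, Complex.exp_neg]
  change _ * (_ + hyp [] [c+1] (-x^2) * _) = _
  have h6 := Complex.exp_ne_zero x
  have h7 : c + 1 ≠ 0 := by simpa using hv2 0
  field_simp
  ring
end

section
/- (Special case e = v+1 of Theorem 3) Let v, μ be complex with v+1, v+2, v+3, μ, μ+1, μ+2, μ+v+1 not nonpositive integers. Then for all complex x: e^{−x} · ∑_{n≥0} ((−x)ⁿ/(μ)_n) · { L_n^{(v)}(x) − (x/(v+2))·L_n^{(v+1)}(x) } = ₃F₃[v+3, μ/2+v/2+1, μ/2+v/2+1/2; v+2, μ, μ+v+1; −4x] + (2x/μ) · ₃F₃[v+3, μ/2+v/2+1, μ/2+v/2+3/2; v+2, μ+1, μ+v+2; −4x] + (x²/(μ(μ+1))) · ₃F₃[v+3, μ/2+v/2+2, μ/2+v/2+3/2; v+2, μ+2, μ+v+3; −4x]. -/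
open scoped BigOperators Nat

lemma poch_zero (a : ℂ) : poch a 0 = 1 := by simp [poch]

lemma poch_succ (a : ℂ) (n : ℕ) : poch a (n + 1) = poch a n * (a + n) := by
  simp [poch, ascPochhammer_succ_eval]

lemma poch_add (a : ℂ) (m n : ℕ) : poch a (m + n) = poch a m * poch (a + m) n := by
  induction n with
  | zero => simp [poch_zero]
  | succ n ih =>
    rw [← add_assoc, poch_succ, ih, poch_succ]; push_cast; ring

lemma poch_succ' (a : ℂ) (n : ℕ) : poch a (n + 1) = a * poch (a + 1) n := by
  rw [add_comm, poch_add]; simp [poch_succ, poch_zero]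

lemma poch_ne (a : ℂ) (h : ∀ k : ℕ, a ≠ -(k : ℂ)) (n : ℕ) : poch a n ≠ 0 := by
  induction n with
  | zero => simp [poch_zero]
  | succ n ih =>
    rw [poch_succ]
    refine mul_ne_zero ih fun h' => h n (eq_neg_of_add_eq_zero_left h')

lemma poch_double (h : ℂ) (n : ℕ) :
    poch h n * poch (h + 1 / 2) n * 4 ^ n = poch (2 * h) (2 * n) := by
  induction n with
  | zero => simp [poch_zero]
  | succ n ih =>
    rw [show 2 * (n + 1) = 2 * n + 1 + 1 by ring, poch_succ _ (2 * n + 1), poch_succ _ (2 * n),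
      ← ih, poch_succ, poch_succ]
    push_cast; ring

lemma vand (r s : ℂ) (n : ℕ) : poch (r + s - n + 1) n =
    ∑ p ∈ Finset.HasAntidiagonal.antidiagonal n,
      (n.choose p.1 : ℂ) * (poch (r - p.1 + 1) p.1 * poch (s - p.2 + 1) p.2) := by
  have key : ∀ (a : ℂ) (k : ℕ), (descPochhammer ℤ k).smeval a = poch (a - k + 1) k := by
    intro a k
    rw [Polynomial.descPochhammer_smeval_eq_ascPochhammer, 
      Polynomial.ascPochhammer_smeval_eq_eval]
    rfl
  have := Ring.descPochhammer_smeval_add (r := r) (s := s) n (Commute.all r s)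
  simpa only [key] using this

lemma poch_nat (m k : ℕ) : poch ((m : ℂ) + 1) k * (m ! : ℂ) = ((m + k)! : ℂ) := by
  induction k with
  | zero => simp [poch_zero]
  | succ k ih =>
    rw [poch_succ, ← add_assoc, Nat.factorial_succ]; push_cast; rw [← ih]; ring

lemma poch_desc_zero (m k : ℕ) (h : m < k) : poch ((m : ℂ) - k + 1) k = 0 := by
  obtain ⟨d, rfl⟩ : ∃ d, k = d + 1 + m := ⟨k - 1 - m, by omega⟩
  rw [poch_add, poch_succ]
  push_cast
  ring

lemma poch_neg (n k : ℕ) : poch (-(n : ℂ)) k = (-1) ^ k * (n.choose k : ℂ) * (k ! : ℂ) := by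
  have h1 : poch (-(n : ℂ)) k = (-1) ^ k * (n.descFactorial k : ℂ) := by
    rw [poch, ascPochhammer_eval_neg_eq_descPochhammer, descPochhammer_eval_eq_descFactorial]
  rw [h1, Nat.descFactorial_eq_factorial_mul_choose]; push_cast; ring

lemma Lag_eq (n : ℕ) (v x : ℂ) (hv : ∀ k : ℕ, v + 1 ≠ -(k : ℂ)) :
    Lag n v x = ∑ p ∈ Finset.HasAntidiagonal.antidiagonal n,
      (n.choose p.1 : ℂ) * poch (v + 1 + p.1) p.2 / (n ! : ℂ) * (-x) ^ p.1 := by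
  have h0 : hyp [-(n : ℂ)] [v + 1] x
      = ∑ k ∈ Finset.range (n + 1), (n.choose k : ℂ) / poch (v + 1) k * (-x) ^ k := by
    unfold hyp
    rw [tsum_eq_sum (s := Finset.range (n + 1))]
    · refine Finset.sum_congr rfl fun k _ => ?_
      have hk : (k ! : ℂ) ≠ 0 := by exact_mod_cast k.factorial_ne_zero
      have := poch_ne _ hv k
      simp only [hypTerm, List.map_cons, List.map_nil, List.prod_cons, List.prod_nil, mul_one,
        poch_neg]
      rw [neg_pow x]
      field_simp
    · intro k hk
      have : n < k := by simpa [Nat.lt_succ_iff] using hk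
      simp [hypTerm, poch_neg, Nat.choose_eq_zero_of_lt this]
  rw [Lag, h0, Finset.Nat.sum_antidiagonal_eq_sum_range_succ
    (fun i j => (n.choose i : ℂ) * poch (v + 1 + i) j / (n ! : ℂ) * (-x) ^ i), Finset.mul_sum]
  refine Finset.sum_congr rfl fun k hk => ?_
  have hkn : k ≤ n := by simpa [Nat.lt_succ_iff] using hk
  have h1 : poch (v + 1) n = poch (v + 1) k * poch (v + 1 + k) (n - k) := by
    rw [← poch_add, Nat.add_sub_cancel' hkn]
  have := poch_ne _ hv k
  rw [h1]
  field_simp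

lemma hasSum_exp_poch (x : ℂ) (k : ℕ) :
    HasSum (fun m : ℕ => x ^ m / (m ! : ℂ) * poch ((m : ℂ) - k + 1) k)
      (x ^ k * Complex.exp x) := by
  rw [← hasSum_nat_add_iff' k]
  have h0 : ∑ i ∈ Finset.range k, x ^ i / (i ! : ℂ) * poch ((i : ℂ) - k + 1) k = 0 := by
    refine Finset.sum_eq_zero fun i hi => ?_
    rw [poch_desc_zero i k (by simpa using hi), mul_zero]
  rw [h0, sub_zero]
  have h1 := (NormedSpace.expSeries_div_hasSum_exp x).mul_left (x ^ k)
  rw [← Complex.exp_eq_exp_ℂ] at h1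
  refine h1.congr_fun ?_
  intro m
  have hm : (m ! : ℂ) ≠ 0 := by exact_mod_cast m.factorial_ne_zero
  have hm' : ((m + k)! : ℂ) ≠ 0 := by exact_mod_cast (m + k).factorial_ne_zero
  have h2 := poch_nat m k
  push_cast
  rw [show (m : ℂ) + k - k + 1 = m + 1 by ring, pow_add]
  field_simp
  rw [← h2]
  ring

lemma hasSum_row (v x : ℂ) (hv : ∀ k : ℕ, v + 1 ≠ -(k : ℂ)) (n : ℕ) :
    HasSum (fun m : ℕ => (-x) ^ m * poch (v + 1 + m) n / ((n ! : ℂ) * (m ! : ℂ)))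
      (Complex.exp (-x) * Lag n v x) := by
  rw [Lag_eq n v x hv, Finset.mul_sum]
  have h : HasSum (fun m : ℕ => ∑ p ∈ Finset.HasAntidiagonal.antidiagonal n,
      (n.choose p.1 : ℂ) * poch (v + 1 + p.1) p.2 / (n ! : ℂ) *
        ((-x) ^ m / (m ! : ℂ) * poch ((m : ℂ) - p.1 + 1) p.1))
      (∑ p ∈ Finset.HasAntidiagonal.antidiagonal n, (n.choose p.1 : ℂ) * poch (v + 1 + p.1) p.2 / (n ! : ℂ) *
        ((-x) ^ p.1 * Complex.exp (-x))) :=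
    hasSum_sum fun p _ => (hasSum_exp_poch (-x) p.1).mul_left _
  convert h using 1
  · ext m
    have h1 := vand m (v + n) n
    rw [show (m : ℂ) + (v + n) - n + 1 = v + 1 + m by ring] at h1
    rw [h1, Finset.mul_sum, Finset.sum_div]
    refine Finset.sum_congr rfl fun p hp => ?_
    have hp' : ((p.1 : ℂ) + p.2) = n := by exact_mod_cast Finset.HasAntidiagonal.mem_antidiagonal.mp hp
    rw [show v + n - p.2 + 1 = v + 1 + p.1 by rw [← hp']; ring]
    have hm : (m ! : ℂ) ≠ 0 := by exact_mod_cast m.factorial_ne_zero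
    have hn : (n ! : ℂ) ≠ 0 := by exact_mod_cast n.factorial_ne_zero
    field_simp
  · refine Finset.sum_congr rfl fun p _ => ?_
    ring

lemma sum_anti (v μ x : ℂ) (hμ : ∀ k : ℕ, μ ≠ -(k : ℂ)) (N : ℕ) :
    ∑ p ∈ Finset.HasAntidiagonal.antidiagonal N,
      (-x) ^ p.1 / poch μ p.1 * ((-x) ^ p.2 * poch (v + 1 + p.2) p.1 / ((p.1 ! : ℂ) * (p.2 ! : ℂ)))
      = (-x) ^ N * poch (μ + v + N) N / (poch μ N * (N ! : ℂ)) := by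
  have h1 := vand (v + N) (μ + N - 1) N
  rw [show v + N + (μ + N - 1) - N + 1 = μ + v + N by ring] at h1
  rw [h1, Finset.mul_sum, Finset.sum_div]
  refine Finset.sum_congr rfl fun p hp => ?_
  have hpn : p.1 + p.2 = N := Finset.HasAntidiagonal.mem_antidiagonal.mp hp
  have hp' : ((p.1 : ℂ) + p.2) = N := by exact_mod_cast hpn
  rw [show v + N - p.1 + 1 = v + 1 + p.2 by rw [← hp']; ring,
    show μ + N - 1 - p.2 + 1 = μ + p.1 by rw [← hp']; ring, ← hpn, poch_add, pow_add]
  have hc : ((p.1 + p.2).choose p.1 : ℂ) * (p.1 ! : ℂ) * (p.2 ! : ℂ) = ((p.1 + p.2)! : ℂ) := by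
    rw [Nat.choose_symm_add]
    exact_mod_cast Nat.add_choose_mul_factorial_mul_factorial p.1 p.2
  have ha : (p.1 ! : ℂ) ≠ 0 := by exact_mod_cast p.1.factorial_ne_zero
  have hb : (p.2 ! : ℂ) ≠ 0 := by exact_mod_cast p.2.factorial_ne_zero
  have hab : ((p.1 + p.2)! : ℂ) ≠ 0 := by exact_mod_cast (p.1 + p.2).factorial_ne_zero
  have h2 := poch_ne _ hμ p.1
  have h3 : poch (μ + p.1) p.2 ≠ 0 := by
    have := poch_ne _ hμ (p.1 + p.2)
    rw [poch_add] at this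
    exact right_ne_zero_of_mul this
  have hcc : ((p.1 + p.2).choose p.1 : ℂ) = ((p.1 + p.2)! : ℂ) / ((p.1 ! : ℂ) * (p.2 ! : ℂ)) := by
    rw [← hc]; field_simp
  rw [hcc]
  field_simp

lemma norm_poch_le (v : ℂ) (m n : ℕ) :
    ‖poch (v + 1 + m) n‖ * (m ! : ℝ) ≤ (‖v‖ + 1) ^ n * ((m + n)! : ℝ) := by
  induction n with
  | zero => simp [poch_zero]
  | succ n ih =>
    rw [poch_succ, norm_mul, ← add_assoc, Nat.factorial_succ, pow_succ]
    have h : ‖v + 1 + m + n‖ ≤ (‖v‖ + 1) * (m + n + 1) := by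
      have h1 : ‖v + 1 + m + n‖ ≤ ‖v‖ + (m + n + 1) := by
        have : v + 1 + m + n = v + ((m + n + 1 : ℕ) : ℂ) := by push_cast; ring
        rw [this]
        refine (norm_add_le _ _).trans ?_
        rw [Complex.norm_natCast]; push_cast; linarith
      have : 0 ≤ ‖v‖ * (m + n) := by positivity
      nlinarith
    push_cast
    calc ‖poch (v + 1 + m) n‖ * ‖v + 1 + m + n‖ * (m ! : ℝ)
        = (‖poch (v + 1 + m) n‖ * (m ! : ℝ)) * ‖v + 1 + m + n‖ := by ring
      _ ≤ ((‖v‖ + 1) ^ n * ((m + n)! : ℝ)) * ((‖v‖ + 1) * (m + n + 1)) := by gcongr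
      _ = _ := by ring

lemma exists_lower (μ : ℂ) (hμ : ∀ k : ℕ, μ ≠ -(k : ℂ)) :
    ∃ D : ℝ, 0 < D ∧ ∀ m : ℕ, (m : ℝ) + 1 ≤ D * ‖μ + m‖ := by
  have hpos : ∀ m : ℕ, 0 < ‖μ + m‖ := fun m =>
    norm_pos_iff.mpr fun h' => hμ m (eq_neg_of_add_eq_zero_left h')
  have h1 : ∀ M : ℕ, ∃ D : ℝ, 0 < D ∧ ∀ m < M, (m : ℝ) + 1 ≤ D * ‖μ + m‖ := by
    intro M
    induction M with
    | zero => exact ⟨1, one_pos, by simp⟩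
    | succ M ih =>
      obtain ⟨D, hD, h⟩ := ih
      refine ⟨D + (M + 1) / ‖μ + M‖, by have := hpos M; positivity, fun m hm => ?_⟩
      rcases Nat.lt_succ_iff_lt_or_eq.mp hm with h' | rfl
      · have : 0 ≤ ((M : ℝ) + 1) / ‖μ + M‖ * ‖μ + m‖ := by positivity
        have := h m h'
        linarith
      · have h2 := hpos m
        have : ((m : ℝ) + 1) / ‖μ + m‖ * ‖μ + m‖ = m + 1 := by field_simp
        have : 0 ≤ D * ‖μ + m‖ := by positivity
        linarith
  obtain ⟨M, hM⟩ := exists_nat_gt (2 * ‖μ‖ + 1)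
  obtain ⟨D, hD, h⟩ := h1 M
  refine ⟨D + 2, by linarith, fun m => ?_⟩
  by_cases hm : m < M
  · have := h m hm
    have := norm_nonneg (μ + m)
    nlinarith
  · have hm' : (M : ℝ) ≤ m := by exact_mod_cast not_lt.mp hm
    have h3 : (m : ℝ) - ‖μ‖ ≤ ‖μ + m‖ := by
      have := norm_sub_norm_le (m : ℂ) (-μ)
      rw [norm_neg, Complex.norm_natCast] at this
      rwa [show (m : ℂ) - -μ = μ + m by ring] at this
    have : 0 ≤ D * ‖μ + m‖ := by positivity
    linarith

lemma exists_lower_poch (μ : ℂ) (hμ : ∀ k : ℕ, μ ≠ -(k : ℂ)) :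
    ∃ D : ℝ, 0 < D ∧ ∀ n : ℕ, (n ! : ℝ) ≤ D ^ n * ‖poch μ n‖ := by
  obtain ⟨D, hD, h⟩ := exists_lower μ hμ
  refine ⟨D, hD, fun n => ?_⟩
  induction n with
  | zero => simp [poch_zero]
  | succ n ih =>
    rw [poch_succ, norm_mul, Nat.factorial_succ, pow_succ]
    push_cast
    calc ((n : ℝ) + 1) * (n ! : ℝ) ≤ (D * ‖μ + n‖) * (D ^ n * ‖poch μ n‖) := by
          gcongr; exact h n
      _ = _ := by ring

noncomputable def dbl (v μ x : ℂ) (p : ℕ × ℕ) : ℂ :=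
  (-x) ^ p.1 / poch μ p.1 * ((-x) ^ p.2 * poch (v + 1 + p.2) p.1 / ((p.1 ! : ℂ) * (p.2 ! : ℂ)))

lemma summable_dbl (v μ x : ℂ) (hμ : ∀ k : ℕ, μ ≠ -(k : ℂ)) : Summable (dbl v μ x) := by
  obtain ⟨D, hD, hl⟩ := exists_lower_poch μ hμ
  have hs : Summable (fun p : ℕ × ℕ =>
      ((2 * (‖v‖ + 1) * D * ‖x‖) ^ p.1 / (p.1 ! : ℝ)) * ((2 * ‖x‖) ^ p.2 / (p.2 ! : ℝ))) :=
    Summable.mul_of_nonneg (Real.summable_pow_div_factorial _) (Real.summable_pow_div_factorial _)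
      (fun n => by positivity) (fun n => by positivity)
  refine Summable.of_norm_bounded hs fun ⟨n, m⟩ => ?_
  have hp : 0 < ‖poch μ n‖ := norm_pos_iff.mpr (poch_ne _ hμ n)
  simp only [dbl, norm_mul, norm_div, norm_pow, norm_neg, Complex.norm_natCast]
  have h1 := norm_poch_le v m n
  have h2 := hl n
  have h3 : ((m + n)! : ℝ) ≤ 2 ^ (m + n) * (m ! : ℝ) * (n ! : ℝ) := by
    have : (m + n)! ≤ 2 ^ (m + n) * m ! * n ! := by
      rw [← Nat.add_choose_mul_factorial_mul_factorial m n]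
      gcongr
      exact Nat.choose_le_two_pow _ _
    exact_mod_cast this
  have hm : (0 : ℝ) < (m ! : ℝ) := by exact_mod_cast m.factorial_pos
  have hn : (0 : ℝ) < (n ! : ℝ) := by exact_mod_cast n.factorial_pos
  have h4 : ‖poch (v + 1 + m) n‖ ≤ (‖v‖ + 1) ^ n * (2 ^ (m + n) * (D ^ n * ‖poch μ n‖)) := by
    refine le_of_mul_le_mul_right ?_ hm
    calc _ ≤ _ := h1
      _ ≤ (‖v‖ + 1) ^ n * (2 ^ (m + n) * (m ! : ℝ) * (n ! : ℝ)) := by gcongr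
      _ ≤ (‖v‖ + 1) ^ n * (2 ^ (m + n) * (m ! : ℝ) * (D ^ n * ‖poch μ n‖)) := by gcongr
      _ = _ := by ring
  calc ‖x‖ ^ n / ‖poch μ n‖ * (‖x‖ ^ m * ‖poch (v + 1 + m) n‖ / ((n ! : ℝ) * (m ! : ℝ)))
      ≤ ‖x‖ ^ n / ‖poch μ n‖ * (‖x‖ ^ m *
        ((‖v‖ + 1) ^ n * (2 ^ (m + n) * (D ^ n * ‖poch μ n‖))) / ((n ! : ℝ) * (m ! : ℝ))) := by
        gcongr
    _ = _ := by
        rw [mul_pow, mul_pow, mul_pow, mul_pow, pow_add]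
        field_simp

/-- coefficients of the product -/
noncomputable def cf (v μ x : ℂ) (N : ℕ) : ℂ :=
  (-x) ^ N * poch (μ + v + N) N / (poch μ N * (N ! : ℂ))

lemma summable_cf (v μ x : ℂ) (hμ : ∀ k : ℕ, μ ≠ -(k : ℂ)) :
    HasSum (cf v μ x) (∑' p, dbl v μ x p) := by
  have h := (summable_dbl v μ x hμ).hasSum
  rw [← Finset.HasAntidiagonal.sigmaAntidiagonalEquivProd.hasSum_iff] at h
  have := h.sigma (g := cf v μ x) (fun N => by
    have h2 := hasSum_fintype (fun c : Finset.HasAntidiagonal.antidiagonal N => dbl v μ x c)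
    convert h2 using 1
    · rfl
    rw [Finset.sum_coe_sort (Finset.HasAntidiagonal.antidiagonal N) (dbl v μ x), cf, ← sum_anti v μ x hμ]
    rfl)
  exact this

lemma hasSum_lag (v μ x : ℂ) (hv : ∀ k : ℕ, v + 1 ≠ -(k : ℂ)) (hμ : ∀ k : ℕ, μ ≠ -(k : ℂ)) :
    HasSum (fun n : ℕ => Complex.exp (-x) * ((-x) ^ n / poch μ n * Lag n v x))
      (∑' p, dbl v μ x p) := by
  refine (summable_dbl v μ x hμ).hasSum.prod_fiberwise fun n => ?_
  have := (hasSum_row v x hv n).mul_left ((-x) ^ n / poch μ n)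
  rw [mul_left_comm] at this
  exact this

lemma summable_cf_mul (v μ x c : ℂ) (hμ : ∀ k : ℕ, μ ≠ -(k : ℂ)) :
    Summable (fun n : ℕ => (c + n) * cf v μ x n) := by
  have h := ((summable_cf v μ (2 * x) hμ).summable.norm).mul_left (‖c‖ + 1)
  refine Summable.of_norm_bounded h fun n => ?_
  have h1 : cf v μ (2 * x) n = 2 ^ n * cf v μ x n := by
    simp only [cf]; rw [show -(2 * x) = 2 * (-x) by ring, mul_pow]; ring
  rw [h1, norm_mul, norm_mul, norm_pow, Complex.norm_ofNat, ← mul_assoc]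
  gcongr
  refine (norm_add_le _ _).trans ?_
  rw [Complex.norm_natCast]
  have h2 : (n : ℝ) ≤ 2 ^ n := by exact_mod_cast Nat.lt_two_pow_self.le
  have h3 : (1 : ℝ) ≤ 2 ^ n := one_le_pow₀ (by norm_num)
  nlinarith [norm_nonneg c]

lemma hypTerm_eq (v μ x h : ℂ) (hv2 : ∀ k : ℕ, v + 2 ≠ -(k : ℂ))
    (hμv : ∀ k : ℕ, μ + v + 1 ≠ -(k : ℂ)) (hh : 2 * h = μ + v + 1) (n : ℕ) :
    hypTerm [v + 3, h + 1 / 2, h] [v + 2, μ, μ + v + 1] (-4 * x) n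
      = (v + 2 + n) * cf (v + 1) μ x n / (v + 2) := by
  have h1 : (v + 2) * poch (v + 3) n = poch (v + 2) n * (v + 2 + n) := by
    rw [← poch_succ, poch_succ', show v + 2 + 1 = v + 3 by ring]
  have h2 := poch_double h n
  rw [hh, two_mul, poch_add] at h2
  have hv0 : v + 2 ≠ 0 := by simpa using hv2 0
  have h3 := poch_ne _ hv2 n
  have h4 := poch_ne _ hμv n
  have h5 : poch (v + 3) n = poch (v + 2) n * (v + 2 + n) / (v + 2) := by
    rw [← h1]; field_simp
  simp only [hypTerm, List.map_cons, List.map_nil, List.prod_cons, List.prod_nil, mul_one, cf]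
  rw [h5, show -4 * x = 4 * (-x) by ring, mul_pow, show μ + (v + 1) + n = μ + v + 1 + n by ring]
  by_cases hp : poch μ n = 0
  · simp [hp]
  have hn : (n ! : ℂ) ≠ 0 := by exact_mod_cast n.factorial_ne_zero
  generalize poch (h + 1 / 2) n = P at h2 ⊢
  field_simp
  linear_combination ((v + 2 + n) * (-x) ^ n) * h2

lemma hasSum_hyp (v μ x h : ℂ) (hv2 : ∀ k : ℕ, v + 2 ≠ -(k : ℂ)) (hμ : ∀ k : ℕ, μ ≠ -(k : ℂ))
    (hμv : ∀ k : ℕ, μ + v + 1 ≠ -(k : ℂ)) (hh : 2 * h = μ + v + 1) :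
    HasSum (fun n : ℕ => (v + 2 + n) * cf (v + 1) μ x n / (v + 2))
      (hyp [v + 3, h + 1 / 2, h] [v + 2, μ, μ + v + 1] (-4 * x)) := by
  have hs := (summable_cf_mul (v + 1) μ x (v + 2) hμ).div_const (v + 2)
  have := hs.hasSum
  unfold hyp
  rwa [tsum_congr (hypTerm_eq v μ x h hv2 hμv hh)]

/-- shift of a sequence -/
noncomputable def sh (f : ℕ → ℂ) : ℕ → ℂ
  | 0 => 0
  | n + 1 => f n

lemma hasSum_sh {f : ℕ → ℂ} {s : ℂ} (h : HasSum f s) : HasSum (sh f) s := by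
  rw [← hasSum_nat_add_iff' 1]
  simpa [sh] using h

lemma coeff_id (v μ x : ℂ) (hv2 : v + 2 ≠ 0) (hμ : ∀ k : ℕ, μ ≠ -(k : ℂ)) (N : ℕ) :
    cf v μ x N - x / (v + 2) * sh (cf (v + 1) μ x) N =
      (v + 2 + N) * cf (v + 1) μ x N / (v + 2) +
      2 * x / μ * sh (fun n : ℕ => (v + 2 + n) * cf (v + 1) (μ + 1) x n / (v + 2)) N +
      x ^ 2 / (μ * (μ + 1)) *
        sh (sh (fun n : ℕ => (v + 2 + n) * cf (v + 1) (μ + 2) x n / (v + 2))) N := by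
  have hμ0 : μ ≠ 0 := by simpa using hμ 0
  have hμ1 : μ + 1 ≠ 0 := fun h => hμ 1 (by push_cast; exact eq_neg_of_add_eq_zero_left h)
  match N with
  | 0 =>
    simp only [cf, sh, poch_zero]
    field_simp
    simp
  | 1 =>
    simp only [cf, sh, poch_zero, poch_succ]
    simp
    field_simp
    ring
  | n + 2 =>
    have hQ : poch (μ + 2) n ≠ 0 := by
      have := poch_ne _ hμ (2 + n)
      rw [poch_add] at this
      exact_mod_cast right_ne_zero_of_mul this
    have hn1 : μ + (n + 1) ≠ 0 := fun h => hμ (n + 1) (by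
      push_cast; exact eq_neg_of_add_eq_zero_left h)
    have hf : (n ! : ℂ) ≠ 0 := by exact_mod_cast n.factorial_ne_zero
    have hf1 : (n : ℂ) + 1 ≠ 0 := by exact_mod_cast n.succ_ne_zero
    have hf2 : (n : ℂ) + 1 + 1 ≠ 0 := by exact_mod_cast (n + 1).succ_ne_zero
    have d2 : poch μ (n + 2) = μ * ((μ + 1) * poch (μ + 2) n) := by
      rw [poch_succ', poch_succ', show μ + 1 + 1 = μ + 2 by ring]
    have d1 : poch μ (n + 1) = μ * ((μ + 1) * poch (μ + 2) n) / (μ + (n + 1)) := by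
      rw [← d2, poch_succ _ (n + 1)]; push_cast; field_simp
    have d3 : poch (μ + 1) (n + 1) = (μ + 1) * poch (μ + 2) n := by
      rw [poch_succ', show μ + 1 + 1 = μ + 2 by ring]
    obtain ⟨u, hu⟩ : ∃ u, u = μ + v + (n + 2) := ⟨_, rfl⟩
    simp only [cf, sh]
    push_cast
    rw [d2, d1, d3, show μ + v + ((n : ℂ) + 2) = u by rw [hu],
      show μ + (v + 1) + ((n : ℂ) + 1) = u by rw [hu]; ring,
      show μ + (v + 1) + ((n : ℂ) + 2) = u + 1 by rw [hu]; ring,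
      show μ + 1 + (v + 1) + ((n : ℂ) + 1) = u + 1 by rw [hu]; ring,
      show μ + 2 + (v + 1) + (n : ℂ) = u + 1 by rw [hu]; ring,
      poch_succ' u (n + 1), poch_succ' u n, poch_succ (u + 1) (n + 1), poch_succ (u + 1) n,
      Nat.factorial_succ (n + 1), Nat.factorial_succ n]
    generalize poch (μ + 2) n = Q at *
    generalize poch (u + 1) n = P at *
    push_cast
    field_simp
    rw [hu]
    ring

/-- Special case `e = v+1` of Theorem 3. -/
theorem stmt_14 (v μ : ℂ)
    (hv1 : ∀ k : ℕ, v + 1 ≠ -(k : ℂ)) (hv2 : ∀ k : ℕ, v + 2 ≠ -(k : ℂ))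
    (hv3 : ∀ k : ℕ, v + 3 ≠ -(k : ℂ))
    (hμ : ∀ k : ℕ, μ ≠ -(k : ℂ)) (hμ1 : ∀ k : ℕ, μ + 1 ≠ -(k : ℂ))
    (hμ2 : ∀ k : ℕ, μ + 2 ≠ -(k : ℂ)) (hμv : ∀ k : ℕ, μ + v + 1 ≠ -(k : ℂ))
    (x : ℂ) :
    (Complex.exp (-x) * ∑' n : ℕ, (-x) ^ n / poch μ n *
        (Lag n v x - x / (v + 2) * Lag n (v + 1) x)) =
      hyp [v + 3, μ / 2 + v / 2 + 1, μ / 2 + v / 2 + 1 / 2]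
          [v + 2, μ, μ + v + 1] (-4 * x) +
        2 * x / μ *
          hyp [v + 3, μ / 2 + v / 2 + 1, μ / 2 + v / 2 + 3 / 2]
            [v + 2, μ + 1, μ + v + 2] (-4 * x) +
        x ^ 2 / (μ * (μ + 1)) *
          hyp [v + 3, μ / 2 + v / 2 + 2, μ / 2 + v / 2 + 3 / 2]
            [v + 2, μ + 2, μ + v + 3] (-4 * x) := by
  have hv1' : ∀ k : ℕ, v + 1 + 1 ≠ -(k : ℂ) := by
    intro k; rw [show v + 1 + 1 = v + 2 by ring]; exact hv2 k
  have hv20 : v + 2 ≠ 0 := by simpa using hv2 0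
  have hl : HasSum (fun n : ℕ => Complex.exp (-x) * ((-x) ^ n / poch μ n *
        (Lag n v x - x / (v + 2) * Lag n (v + 1) x)))
      ((∑' p, dbl v μ x p) - x / (v + 2) * ∑' p, dbl (v + 1) μ x p) := by
    refine ((hasSum_lag v μ x hv1 hμ).sub
      ((hasSum_lag (v + 1) μ x hv1' hμ).mul_left (x / (v + 2)))).congr_fun fun n => ?_
    ring
  rw [← tsum_mul_left, hl.tsum_eq]
  have hA := hasSum_hyp v μ x (μ / 2 + v / 2 + 1 / 2) hv2 hμ hμv (by ring)
  have hB := hasSum_hyp v (μ + 1) x (μ / 2 + v / 2 + 1) hv2 hμ1 (by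
    intro k hk
    refine hμv (k + 1) ?_
    push_cast; linear_combination hk) (by ring)
  have hC := hasSum_hyp v (μ + 2) x (μ / 2 + v / 2 + 3 / 2) hv2 hμ2 (by
    intro k hk
    refine hμv (k + 2) ?_
    push_cast; linear_combination hk) (by ring)
  have hL := (summable_cf v μ x hμ).sub
    ((hasSum_sh (summable_cf (v + 1) μ x hμ)).mul_left (x / (v + 2)))
  have hR := (hA.add ((hasSum_sh hB).mul_left (2 * x / μ))).add
    ((hasSum_sh (hasSum_sh hC)).mul_left (x ^ 2 / (μ * (μ + 1))))
  have hLR := hL.unique (hR.congr_fun (coeff_id v μ x hv20 hμ))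
  rw [hLR]
  have e1 : μ / 2 + v / 2 + 1 / 2 + 1 / 2 = μ / 2 + v / 2 + 1 := by ring
  have e2 : μ / 2 + v / 2 + 1 + 1 / 2 = μ / 2 + v / 2 + 3 / 2 := by ring
  have e3 : μ / 2 + v / 2 + 3 / 2 + 1 / 2 = μ / 2 + v / 2 + 2 := by ring
  have e4 : μ + 1 + v + 1 = μ + v + 2 := by ring
  have e5 : μ + 2 + v + 1 = μ + v + 3 := by ring
  have hswap : hyp [v + 3, μ / 2 + v / 2 + 3 / 2, μ / 2 + v / 2 + 1]
      [v + 2, μ + 1, μ + v + 2] (-4 * x) = hyp [v + 3, μ / 2 + v / 2 + 1, μ / 2 + v / 2 + 3 / 2]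
      [v + 2, μ + 1, μ + v + 2] (-4 * x) := by
    unfold hyp
    refine tsum_congr fun n => ?_
    simp only [hypTerm, List.map_cons, List.map_nil, List.prod_cons, List.prod_nil, mul_one]
    ring
  rw [e1, e2, e3, e4, e5, hswap]
end
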